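/- Fix a real density d with 1/6 < d < 1/3. For each natural number n let W_n be the finite set of cyclically reduced words of length 6 over n generators, let A_n ⊆ W_n be the subset of words w with w(0) = w(3) (two equal antipodal letters), and let K_n = ⌈(2n − 1 : ℝ)^(6d)⌉₊. Then the proportion of K_n-element subsets of W_n that are disjoint from A_n, namely ((|W_n| − |A_n|).choose K_n : ℝ) / (|W_n|.choose K_n : ℝ), tends to 0 as n → ∞. In other words, with overwhelming probability a uniformly random set of ⌈(2n−1)^{6d}⌉ cyclically reduced length-6 relators contains a relator with two equal antipodal letters. -/

import Mathlib

/-!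
A uniformly random `K`-subset of an `N`-element set avoids a given `a`-element subset with
probability at most `(1 - a / N) ^ K ≤ exp (-(K * a / N))`, because each factor
`(N - a - k) / (N - k)` of the exact probability is at most `1 - a / N`. Here `N = |W_n| ≤ (2n)^6`
trivially, while `a = |A_n| ≥ n^5`: words without inverse letters are automatically cyclically
reduced, and requiring `w 0 = w 3` only removes one of their six free choices. So a random relator
lies in `A_n` with probability at least `1 / (64 n)`, and `K_n ≥ n^(6d)` samples find one as soon
as `6d > 1`.
-/

/-- A word of length 6 over `n` generators is cyclically reduced if no two
cyclically adjacent letters are mutually inverse. -/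
def CyclicallyReduced6 (n : ℕ) (w : Fin 6 → Fin n × Bool) : Prop :=
  ∀ j : Fin 6, w (j + 1) ≠ ((w j).1, !(w j).2)

instance (n : ℕ) : DecidablePred (CyclicallyReduced6 n) := fun w => by
  unfold CyclicallyReduced6; infer_instance

open Filter Finset

lemma descFactorial_mul_pow_le {M N : ℕ} (h : M ≤ N) (K : ℕ) :
    M.descFactorial K * N ^ K ≤ N.descFactorial K * M ^ K := by
  induction K with
  | zero => simp
  | succ k ih =>
    have factor_le : (M - k) * N ≤ (N - k) * M := by
      rw [Nat.sub_mul, Nat.sub_mul, Nat.mul_comm N M]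
      exact Nat.sub_le_sub_left (Nat.mul_le_mul_left k h) _
    calc M.descFactorial (k + 1) * N ^ (k + 1)
        = (M - k) * N * (M.descFactorial k * N ^ k) := by rw [Nat.descFactorial_succ]; ring
      _ ≤ (N - k) * M * (N.descFactorial k * M ^ k) := Nat.mul_le_mul factor_le ih
      _ = N.descFactorial (k + 1) * M ^ (k + 1) := by rw [Nat.descFactorial_succ]; ring

lemma choose_mul_pow_le {M N : ℕ} (h : M ≤ N) (K : ℕ) :
    M.choose K * N ^ K ≤ N.choose K * M ^ K := by
  refine Nat.le_of_mul_le_mul_left ?_ K.factorial_pos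
  simpa only [Nat.descFactorial_eq_factorial_mul_choose, mul_assoc]
    using descFactorial_mul_pow_le h K

lemma choose_div_choose_le_div_pow {M N : ℕ} (h : M ≤ N) (K : ℕ) :
    (M.choose K : ℝ) / N.choose K ≤ ((M : ℝ) / N) ^ K := by
  -- For `K > N` the left side is `0 / 0 = 0`.
  rcases lt_or_ge N K with hNK | hKN
  · rw [Nat.choose_eq_zero_of_lt hNK, Nat.cast_zero, div_zero]
    positivity
  have choose_cast_pos : (0 : ℝ) < N.choose K := mod_cast Nat.choose_pos hKN
  have pow_cast_pos : (0 : ℝ) < (N : ℝ) ^ K := mod_cast Nat.pow_pos_iff.2 (by omega)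
  rw [div_pow, div_le_div_iff₀ choose_cast_pos pow_cast_pos, mul_comm ((M : ℝ) ^ K)]
  exact_mod_cast choose_mul_pow_le h K

lemma choose_sub_div_choose_le_exp {N a : ℕ} (h : a ≤ N) (K : ℕ) :
    ((N - a).choose K : ℝ) / N.choose K ≤ Real.exp (-(K * (a / N))) := by
  have base_le : ((N - a : ℕ) : ℝ) / N ≤ Real.exp (-(a / N)) :=
    calc ((N - a : ℕ) : ℝ) / N = N / N - a / N := by rw [Nat.cast_sub h, sub_div]
      _ ≤ 1 - a / N := sub_le_sub_right (div_self_le_one _) _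
      _ ≤ Real.exp (-(a / N)) := Real.one_sub_le_exp_neg _
  calc ((N - a).choose K : ℝ) / N.choose K
      ≤ (((N - a : ℕ) : ℝ) / N) ^ K := choose_div_choose_le_div_pow (Nat.sub_le N a) K
    _ ≤ Real.exp (-(a / N)) ^ K := pow_le_pow_left₀ (by positivity) base_le K
    _ = Real.exp (-(K * (a / N))) := by rw [← Real.exp_nat_mul, mul_neg]

lemma card_filter_apply_eq_apply {ι α : Type*} [Fintype ι] [DecidableEq ι] [Fintype α]
    [DecidableEq α] {i j : ι} (hij : i ≠ j) :
    #{f : ι → α | f i = f j} = Fintype.card α ^ (Fintype.card ι - 1) := by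
  have card_restrict : #{f : ι → α | f i = f j} = Fintype.card ({k // k ≠ j} → α) := by
    refine card_nbij' (t := univ) (fun f k => f k)
      (fun g k => if hk : k = j then g ⟨i, hij⟩ else g ⟨k, hk⟩) ?_ ?_ ?_ ?_
    · simp
    · intro g _
      simp [hij]
    · intro f hf
      funext k
      by_cases hk : k = j
      · simpa [hk] using hf
      · simp [hk]
    · intro g _
      funext k
      simp [k.2]
  rw [card_restrict, Fintype.card_fun, Fintype.card_subtype_compl, Fintype.card_subtype_eq]

/-- The set `W_n` of cyclically reduced words of length 6 over `n` generators. -/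
def cyclicallyReducedWords (n : ℕ) : Finset (Fin 6 → Fin n × Bool) :=
  univ.filter fun w => CyclicallyReduced6 n w

/-- The set `A_n` of cyclically reduced words whose antipodal letters at positions `0` and `3`
are equal. -/
def antipodalWords (n : ℕ) : Finset (Fin 6 → Fin n × Bool) :=
  univ.filter fun w => CyclicallyReduced6 n w ∧ w 0 = w 3

/-- The positive word spelled by a sequence of generators; the generator `i` itself, as opposed to
its inverse, is encoded as the letter `(i, true)`. -/
def positiveWord {n : ℕ} (f : Fin 6 → Fin n) : Fin 6 → Fin n × Bool :=
  fun j => (f j, true)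

/-- The number `K_n` of relators in the hexagonal model at density `d`. -/
noncomputable def relatorCount (d : ℝ) (n : ℕ) : ℕ :=
  ⌈(2 * (n : ℝ) - 1) ^ (6 * d)⌉₊

lemma cyclicallyReduced6_positiveWord {n : ℕ} (f : Fin 6 → Fin n) :
    CyclicallyReduced6 n (positiveWord f) := by
  simp [CyclicallyReduced6, positiveWord]

lemma positiveWord_injective {n : ℕ} : Function.Injective (positiveWord (n := n)) :=
  fun _ _ h => funext fun j => congrArg Prod.fst (congrFun h j)

lemma antipodalWords_subset_cyclicallyReducedWords (n : ℕ) :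
    antipodalWords n ⊆ cyclicallyReducedWords n :=
  monotone_filter_right _ fun _ _ h => h.1

lemma card_cyclicallyReducedWords_le (n : ℕ) : #(cyclicallyReducedWords n) ≤ (2 * n) ^ 6 :=
  calc #(cyclicallyReducedWords n) ≤ Fintype.card (Fin 6 → Fin n × Bool) := card_le_univ _
    _ = (2 * n) ^ 6 := by simp [mul_comm]

lemma pow_six_le_card_cyclicallyReducedWords (n : ℕ) : n ^ 6 ≤ #(cyclicallyReducedWords n) :=
  calc n ^ 6 = #(univ : Finset (Fin 6 → Fin n)) := by simp
    _ ≤ #(cyclicallyReducedWords n) :=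
      card_le_card_of_injOn positiveWord
        (fun f _ => by simp [cyclicallyReducedWords, cyclicallyReduced6_positiveWord])
        positiveWord_injective.injOn

lemma pow_five_le_card_antipodalWords (n : ℕ) : n ^ 5 ≤ #(antipodalWords n) :=
  calc n ^ 5 = #{f : Fin 6 → Fin n | f 0 = f 3} := by
        rw [card_filter_apply_eq_apply (by decide), Fintype.card_fin, Fintype.card_fin]
    _ ≤ #(antipodalWords n) :=
      card_le_card_of_injOn positiveWord
        (fun f hf => by
          have apply_eq : f 0 = f 3 := by simpa using hf
          simp [antipodalWords, cyclicallyReduced6_positiveWord, positiveWord, apply_eq])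
        positiveWord_injective.injOn

lemma inv_le_card_antipodalWords_div {n : ℕ} (hn : 0 < n) :
    (64 * n : ℝ)⁻¹ ≤ #(antipodalWords n) / #(cyclicallyReducedWords n) := by
  have card_pos : 0 < #(cyclicallyReducedWords n) :=
    (Nat.pow_pos hn).trans_le (pow_six_le_card_cyclicallyReducedWords n)
  calc (64 * n : ℝ)⁻¹ = (n : ℝ) ^ 5 / (2 * n) ^ 6 := by field_simp; norm_num
    _ ≤ #(antipodalWords n) / #(cyclicallyReducedWords n) :=
      div_le_div₀ (by positivity) (mod_cast pow_five_le_card_antipodalWords n)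
        (mod_cast card_pos) (mod_cast card_cyclicallyReducedWords_le n)

lemma proportion_avoiding_antipodalWords_le_exp {n : ℕ} (hn : 0 < n) (K : ℕ) :
    ((#(cyclicallyReducedWords n) - #(antipodalWords n)).choose K : ℝ) /
        (#(cyclicallyReducedWords n)).choose K ≤ Real.exp (-(K / n / 64)) := by
  refine (choose_sub_div_choose_le_exp
    (card_le_card (antipodalWords_subset_cyclicallyReducedWords n)) K).trans ?_
  refine Real.exp_le_exp.2 (neg_le_neg ?_)
  calc (K / n / 64 : ℝ) = K * (64 * n : ℝ)⁻¹ := by rw [div_div, mul_comm (n : ℝ), div_eq_mul_inv]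
    _ ≤ K * (#(antipodalWords n) / #(cyclicallyReducedWords n)) :=
      mul_le_mul_of_nonneg_left (inv_le_card_antipodalWords_div hn) K.cast_nonneg

lemma tendsto_relatorCount_div_atTop {d : ℝ} (hd : 1 / 6 < d) :
    Tendsto (fun n : ℕ => (relatorCount d n : ℝ) / n) atTop atTop := by
  have rpow_tendsto : Tendsto (fun n : ℕ => (n : ℝ) ^ (6 * d - 1)) atTop atTop :=
    (tendsto_rpow_atTop (by linarith)).comp tendsto_natCast_atTop_atTop
  refine tendsto_atTop_mono' _ ?_ rpow_tendsto
  filter_upwards [eventually_ge_atTop 1] with n hn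
  have one_le : (1 : ℝ) ≤ n := mod_cast hn
  have rpow_le : (n : ℝ) ^ (6 * d) ≤ relatorCount d n :=
    (Real.rpow_le_rpow (by positivity) (by linarith) (by linarith)).trans (Nat.le_ceil _)
  rw [Real.rpow_sub_one (by positivity)]
  gcongr

lemma eventually_relatorCount_le_card {d : ℝ} (hd : d < 1) :
    ∀ᶠ n : ℕ in atTop, relatorCount d n ≤ #(cyclicallyReducedWords n) := by
  have base_tendsto : Tendsto (fun n : ℕ => 2 * (n : ℝ) - 1) atTop atTop :=
    tendsto_atTop_add_const_right _ _
      (tendsto_natCast_atTop_atTop.const_mul_atTop (by norm_num : (0 : ℝ) < 2))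
  have rpow_tendsto : Tendsto (fun n : ℕ => (2 * (n : ℝ) - 1) ^ (6 - 6 * d)) atTop atTop :=
    (tendsto_rpow_atTop (by linarith)).comp base_tendsto
  filter_upwards [rpow_tendsto.eventually_ge_atTop 64, base_tendsto.eventually_gt_atTop 0]
    with n rpow_ge base_pos
  refine (Nat.ceil_le.2 ?_).trans (pow_six_le_card_cyclicallyReducedWords n)
  have scaled_le : (2 * (n : ℝ) - 1) ^ (6 * d) * 64 ≤ n ^ 6 * 64 :=
    calc (2 * (n : ℝ) - 1) ^ (6 * d) * 64
        ≤ (2 * (n : ℝ) - 1) ^ (6 * d) * (2 * (n : ℝ) - 1) ^ (6 - 6 * d) := by gcongr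
      _ = (2 * (n : ℝ) - 1) ^ 6 := by
        rw [← Real.rpow_add base_pos, add_sub_cancel, Real.rpow_ofNat]
      _ ≤ (2 * (n : ℝ)) ^ 6 := by gcongr; linarith
      _ = n ^ 6 * 64 := by ring
  push_cast
  linarith

/-- The first conjunct guarantees that the proportion is eventually not of the form `0 / 0`. -/
theorem tendsto_proportion_avoiding_antipodal_zero_general (d : ℝ)
    (hd1 : 1 / 6 < d) (hd2 : d < 1) :
    (∀ᶠ n : ℕ in atTop, relatorCount d n ≤ #(cyclicallyReducedWords n)) ∧
      Tendsto (fun n : ℕ =>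
          ((#(cyclicallyReducedWords n) - #(antipodalWords n)).choose (relatorCount d n) : ℝ) /
            (#(cyclicallyReducedWords n)).choose (relatorCount d n))
        atTop (nhds 0) := by
  refine ⟨eventually_relatorCount_le_card hd2, ?_⟩
  have exp_tendsto : Tendsto (fun n : ℕ => Real.exp (-((relatorCount d n : ℝ) / n / 64)))
      atTop (nhds 0) :=
    Real.tendsto_exp_neg_atTop_nhds_zero.comp
      ((tendsto_relatorCount_div_atTop hd1).atTop_div_const (by norm_num))
  refine squeeze_zero' (.of_forall fun n => by positivity) ?_ exp_tendsto
  filter_upwards [eventually_gt_atTop 0] with n hn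
  exact proportion_avoiding_antipodalWords_le_exp hn _

/-- In the hexagonal model at density `1/6 < d < 1/3`, the proportion of
`⌈(2n-1)^(6d)⌉`-element sets of cyclically reduced length-6 relators avoiding
all relators with two equal antipodal letters tends to `0`. -/
theorem tendsto_proportion_avoiding_antipodal_zero (d : ℝ)
    (hd1 : 1 / 6 < d) (hd2 : d < 1 / 3) :
    Filter.Tendsto (fun n : ℕ =>
        let W := Finset.univ.filter fun w : Fin 6 → Fin n × Bool =>
          CyclicallyReduced6 n w
        let A := Finset.univ.filter fun w : Fin 6 → Fin n × Bool =>
          CyclicallyReduced6 n w ∧ w 0 = w 3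
        let K := ⌈(2 * (n : ℝ) - 1) ^ (6 * d)⌉₊
        (((W.card - A.card).choose K : ℝ)) / ((W.card.choose K : ℝ)))
      Filter.atTop (nhds 0) :=
  (tendsto_proportion_avoiding_antipodal_zero_general d hd1 (by linarith)).2
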